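/- arXiv:2301.08390 — 5 statements merged into one kernel-verified Lean document; each statement's English description precedes it below -/
import Mathlib

section
/- Let E be a real inner product space, ι a finite index set, w : ι → ℝ with w_i ≥ 0 for all i and Σ_{i∈ι} w_i > 0, and x : ι → E, and suppose s = Σ_{i∈ι} w_i·x_i ≠ 0. Then s/‖s‖ is the unique global minimizer of F(μ) = Σ_{i∈ι} w_i·‖μ − x_i‖² over the unit sphere {μ ∈ E : ‖μ‖ = 1}; that is, ‖s/‖s‖‖ = 1 and F(μ) > F(s/‖s‖) for every μ with ‖μ‖ = 1 and μ ≠ s/‖s‖. (This is the paper's appendix claim that renormalizing the centroid after each μ-update exactly solves the OSLO μ-step under the constraint ‖μ_k‖ = 1.) -/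
open scoped BigOperators

/-- With nonnegative weights `w` of positive total mass and `s = Σ_i w_i • x_i ≠ 0`,
the normalized vector `s/‖s‖` is the unique global minimizer of
`F(μ) = Σ_i w_i·‖μ − x_i‖²` over the unit sphere `{μ : ‖μ‖ = 1}`. -/
theorem weighted_barycenter_unit_sphere_minimizer
    {E : Type*} [NormedAddCommGroup E] [InnerProductSpace ℝ E]
    {ι : Type*} [Fintype ι] (w : ι → ℝ) (hw : ∀ i, 0 ≤ w i)
    (hW : 0 < ∑ i, w i) (x : ι → E)
    (s : E) (hs_def : s = ∑ i, w i • x i) (hs : s ≠ 0) :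
    ‖(‖s‖⁻¹ • s : E)‖ = 1 ∧
      ∀ μ : E, ‖μ‖ = 1 → μ ≠ ‖s‖⁻¹ • s →
        ∑ i, w i * ‖(‖s‖⁻¹ • s : E) - x i‖ ^ 2 < ∑ i, w i * ‖μ - x i‖ ^ 2 := by
  have hpos : 0 < ‖s‖ := norm_pos_iff.mpr hs
  have hu : ‖(‖s‖⁻¹ • s : E)‖ = 1 := by
    rw [norm_smul, norm_inv, norm_norm, inv_mul_cancel₀ hpos.ne']
  have key : ∀ ν : E, ‖ν‖ = 1 →
      ∑ i, w i * ‖ν - x i‖ ^ 2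
        = ∑ i, w i - 2 * inner ℝ ν s + ∑ i, w i * ‖x i‖ ^ 2 := by
    intro ν hν
    rw [hs_def, inner_sum, Finset.mul_sum, ← Finset.sum_sub_distrib, ← Finset.sum_add_distrib]
    refine Finset.sum_congr rfl fun i _ => ?_
    rw [norm_sub_sq_real, hν, inner_smul_right]
    ring
  refine ⟨hu, fun μ hμ hne => ?_⟩
  rw [key _ hu, key _ hμ]
  have h1 : inner ℝ μ (‖s‖⁻¹ • s) < 1 := by
    have h2 : 0 < ‖μ - ‖s‖⁻¹ • s‖ ^ 2 := by
      have := norm_pos_iff.mpr (sub_ne_zero.mpr hne)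
      positivity
    rw [norm_sub_sq_real, hμ, hu] at h2
    linarith
  have h3 : inner ℝ (‖s‖⁻¹ • s) s = ‖s‖ := by
    rw [real_inner_smul_left, real_inner_self_eq_norm_sq]
    field_simp
  have h4 : inner ℝ μ s < ‖s‖ := by
    rwa [inner_smul_right, inv_mul_lt_iff₀ hpos, mul_one] at h1
  rw [h3]
  linarith
end

section
/- In the OSLO setup, fix z with z_i ∈ Δ^K for all i ∈ S ∪ Q and z_i = y_i for i ∈ S, and fix μ ∈ E^K. Consider L(ξ, z, μ) as a function of ξ over the set of ξ with ξ_i = 1 for i ∈ S and ξ_i ∈ (0,1) for i ∈ Q. Then this function attains its unique global maximum at ξ* given, for each i ∈ Q, by ξ*_i = σ((1/λ_ξ)·Σ_{k=1}^K z_{ik}·log p(v_i, k; μ)); that is, L(ξ, z, μ) < L(ξ*, z, μ) for every such feasible ξ ≠ ξ*. (ξ-block of Proposition 1 for the full OSLO objective.) -/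
open scoped BigOperators

/-- Binary entropy `H_b(ξ) = −ξ·log ξ − (1−ξ)·log(1−ξ)`. -/
noncomputable def Hb (ξ : ℝ) : ℝ := -ξ * Real.log ξ - (1 - ξ) * Real.log (1 - ξ)

/-- Sigmoid `σ(x) = 1/(1+exp(−x))`. -/
noncomputable def sigmoid (x : ℝ) : ℝ := 1 / (1 + Real.exp (-x))

/-- Shannon entropy `H(z) = −Σ_k z_k·log z_k` (with the convention `0·log 0 = 0`,
which holds since `Real.log 0 = 0`). -/
noncomputable def shannonH {K : ℕ} (z : Fin K → ℝ) : ℝ := -∑ k, z k * Real.log (z k)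

/-- Gaussian parametric model: `log p(v, k; μ) = −(1/2)·‖v − μ_k‖² + c`. -/
noncomputable def logp {E : Type*} [NormedAddCommGroup E] [InnerProductSpace ℝ E]
    {K : ℕ} (c : ℝ) (v : E) (k : Fin K) (μ : Fin K → E) : ℝ :=
  -(1 / 2) * ‖v - μ k‖ ^ 2 + c

/-- The OSLO objective
`L(ξ, z, μ) = Σ_{i∈S∪Q} ξ_i·Σ_k z_{ik}·log p(v_i, k; μ) + Σ_{i∈Q} (λ_z·H(z_i) + λ_ξ·H_b(ξ_i))`. -/
noncomputable def osloL {E : Type*} [NormedAddCommGroup E] [InnerProductSpace ℝ E]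
    {ι : Type*} [DecidableEq ι] {K : ℕ} (S Q : Finset ι) (v : ι → E)
    (lamxi lamz c : ℝ) (ξ : ι → ℝ) (z : ι → Fin K → ℝ) (μ : Fin K → E) : ℝ :=
  (∑ i ∈ S ∪ Q, ξ i * ∑ k, z i k * logp c (v i) k μ) +
    ∑ i ∈ Q, (lamz * shannonH (z i) + lamxi * Hb (ξ i))

/-- Scalar Gibbs inequality behind the ξ-block. -/
theorem xi_scalar (a x : ℝ) (hx0 : 0 < x) (hx1 : x < 1) (hne : x ≠ sigmoid a) :
    x * a + Hb x < sigmoid a * a + Hb (sigmoid a) := by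
  have he := Real.exp_pos (-a)
  have hs0 : 0 < sigmoid a := by unfold sigmoid; positivity
  have h1s : 1 - sigmoid a = Real.exp (-a) * sigmoid a := by
    unfold sigmoid; field_simp; ring
  have hs1 : 0 < 1 - sigmoid a := by rw [h1s]; positivity
  have ha : Real.log (1 - sigmoid a) = -a + Real.log (sigmoid a) := by
    rw [h1s, Real.log_mul he.ne' hs0.ne', Real.log_exp]
  generalize sigmoid a = s at *
  have hx1' : 0 < 1 - x := by linarith
  have A : Real.log s - Real.log x < s / x - 1 := by
    rw [← Real.log_div hs0.ne' hx0.ne']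
    apply Real.log_lt_sub_one_of_pos (by positivity)
    intro h
    rw [div_eq_one_iff_eq hx0.ne'] at h
    exact hne h.symm
  have B : Real.log (1 - s) - Real.log (1 - x) ≤ (1 - s) / (1 - x) - 1 := by
    rw [← Real.log_div hs1.ne' hx1'.ne']
    exact Real.log_le_sub_one_of_pos (by positivity)
  have A' := mul_lt_mul_of_pos_left A hx0
  have B' := mul_le_mul_of_nonneg_left B hx1'.le
  have e1 : x * (s / x - 1) = s - x := by field_simp
  have e2 : (1 - x) * ((1 - s) / (1 - x) - 1) = x - s := by field_simp; ring
  rw [e1] at A'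
  rw [e2] at B'
  have ha' : a = Real.log s - Real.log (1 - s) := by linarith
  unfold Hb
  rw [ha']
  linarith

/-- ξ-block of OSLO's Proposition 1: with `z` and `μ` fixed, the OSLO objective as a
function of feasible `ξ` (equal to 1 on the support, in `(0,1)` on the query set) attains
its unique global maximum at `ξ*_i = σ((1/λ_ξ)·Σ_k z_{ik}·log p(v_i, k; μ))` for `i ∈ Q`. -/
theorem oslo_xi_block
    {E : Type*} [NormedAddCommGroup E] [InnerProductSpace ℝ E]
    {ι : Type*} [DecidableEq ι] {K : ℕ} (hK : 1 ≤ K)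
    (S Q : Finset ι) (hSQ : Disjoint S Q)
    (v : ι → E) (y : ι → Fin K → ℝ) (hy : ∀ i ∈ S, ∃ k, y i = Pi.single k 1)
    (lamxi lamz c : ℝ) (hlxi : 0 < lamxi) (hlz : 0 < lamz)
    (z : ι → Fin K → ℝ) (hz : ∀ i ∈ S ∪ Q, z i ∈ stdSimplex ℝ (Fin K))
    (hzS : ∀ i ∈ S, z i = y i)
    (μ : Fin K → E)
    (ξstar : ι → ℝ) (hξstarS : ∀ i ∈ S, ξstar i = 1)
    (hξstarQ : ∀ i ∈ Q,
      ξstar i = sigmoid ((1 / lamxi) * ∑ k, z i k * logp c (v i) k μ)) :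
    ∀ ξ : ι → ℝ, (∀ i ∈ S, ξ i = 1) → (∀ i ∈ Q, ξ i ∈ Set.Ioo (0 : ℝ) 1) →
      (∃ i ∈ Q, ξ i ≠ ξstar i) →
      osloL S Q v lamxi lamz c ξ z μ < osloL S Q v lamxi lamz c ξstar z μ := by
  intro ξ hS hQ ⟨j, hj, hjne⟩
  have key : ∀ i ∈ Q, ξ i ≠ ξstar i →
      ξ i * (∑ k, z i k * logp c (v i) k μ) + (lamz * shannonH (z i) + lamxi * Hb (ξ i)) <
      ξstar i * (∑ k, z i k * logp c (v i) k μ) +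
        (lamz * shannonH (z i) + lamxi * Hb (ξstar i)) := by
    intro i hi hne
    have h := xi_scalar ((1 / lamxi) * ∑ k, z i k * logp c (v i) k μ) (ξ i)
      (hQ i hi).1 (hQ i hi).2 (by rw [← hξstarQ i hi]; exact hne)
    rw [← hξstarQ i hi] at h
    generalize (∑ k, z i k * logp c (v i) k μ) = T at *
    have h' := mul_lt_mul_of_pos_left h hlxi
    have e : ∀ x H : ℝ, lamxi * (x * (1 / lamxi * T) + H) = x * T + lamxi * H := by
      intro x H; field_simp
    rw [e, e] at h'
    linarith
  unfold osloL
  rw [Finset.sum_union hSQ, Finset.sum_union hSQ, add_assoc, add_assoc,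
    ← Finset.sum_add_distrib, ← Finset.sum_add_distrib]
  refine add_lt_add_of_le_of_lt (le_of_eq ?_) ?_
  · exact Finset.sum_congr rfl fun i hi => by rw [hS i hi, hξstarS i hi]
  · refine Finset.sum_lt_sum (fun i hi => ?_) ⟨j, hj, key j hj hjne⟩
    by_cases h : ξ i = ξstar i
    · rw [h]
    · exact (key i hi h).le
end

section
/- In the OSLO setup, fix ξ with ξ_i = 1 for i ∈ S and ξ_i ∈ [0,1] for i ∈ Q, and fix μ ∈ E^K. Consider L(ξ, z, μ) as a function of z over the set of z with z_i = y_i for i ∈ S and z_i ∈ Δ^K for i ∈ Q. Then this function attains its unique global maximum at z* given, for each i ∈ Q and each k, by z*_{ik} = exp((ξ_i/λ_z)·log p(v_i, k; μ)) / Σ_{j=1}^K exp((ξ_i/λ_z)·log p(v_i, j; μ)); that is, L(ξ, z, μ) < L(ξ, z*, μ) for every such feasible z ≠ z*. (z-block of Proposition 1 for the full OSLO objective.) -/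
open scoped BigOperators

/-- Pointwise Gibbs inequality. -/
lemma gibbs_pt_lt {p w : ℝ} (hp : 0 ≤ p) (hw : 0 < w) (h : p ≠ w) :
    p * (Real.log w - Real.log p) < w - p := by
  rcases hp.eq_or_lt with rfl | hp
  · simpa using hw
  · have h1 : w / p ≠ 1 := by
      intro h'
      rw [div_eq_one_iff_eq hp.ne'] at h'
      exact h h'.symm
    have h2 := Real.log_lt_sub_one_of_pos (div_pos hw hp) h1
    rw [Real.log_div hw.ne' hp.ne'] at h2
    have h3 := mul_lt_mul_of_pos_left h2 hp
    have h4 : p * (w / p - 1) = w - p := by field_simp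
    linarith

lemma gibbs_sum_lt {K : ℕ} {p w : Fin K → ℝ} (hp : ∀ k, 0 ≤ p k) (hw : ∀ k, 0 < w k)
    (hp1 : ∑ k, p k = 1) (hw1 : ∑ k, w k = 1) (h : p ≠ w) :
    ∑ k, p k * (Real.log (w k) - Real.log (p k)) < 0 := by
  obtain ⟨k, hk⟩ := Function.ne_iff.mp h
  have : ∑ k, p k * (Real.log (w k) - Real.log (p k)) < ∑ k, (w k - p k) := by
    apply Finset.sum_lt_sum
    · intro j _
      by_cases hj : p j = w j
      · simp [hj]
      · exact (gibbs_pt_lt (hp j) (hw j) hj).le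
    · exact ⟨k, Finset.mem_univ k, gibbs_pt_lt (hp k) (hw k) hk⟩
  rw [Finset.sum_sub_distrib, hp1, hw1] at this
  simpa using this

/-- Single-sample version of the z-block. -/
lemma block_lt {K : ℕ} (hK : 1 ≤ K) (x lam : ℝ) (hl : 0 < lam) (l p w : Fin K → ℝ)
    (hp : p ∈ stdSimplex ℝ (Fin K))
    (hw : ∀ k, w k = Real.exp ((x / lam) * l k) / ∑ j, Real.exp ((x / lam) * l j))
    (h : p ≠ w) :
    x * ∑ k, p k * l k + lam * shannonH p < x * ∑ k, w k * l k + lam * shannonH w := by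
  haveI : Nonempty (Fin K) := ⟨⟨0, hK⟩⟩
  set Z := ∑ j, Real.exp ((x / lam) * l j) with hZ
  have hZpos : 0 < Z := Finset.sum_pos (fun j _ => Real.exp_pos _) Finset.univ_nonempty
  have hwpos : ∀ k, 0 < w k := fun k => by
    rw [hw]
    exact div_pos (Real.exp_pos _) hZpos
  have hw1 : ∑ k, w k = 1 := by
    simp_rw [hw]
    rw [← Finset.sum_div, ← hZ, div_self hZpos.ne']
  have hlog : ∀ k, x * l k = lam * (Real.log (w k) + Real.log Z) := fun k => by
    rw [hw, Real.log_div (Real.exp_pos _).ne' hZpos.ne', Real.log_exp]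
    field_simp
    ring
  have key : ∀ q : Fin K → ℝ, ∑ k, q k = 1 → x * ∑ k, q k * l k + lam * shannonH q
      = lam * Real.log Z + lam * ∑ k, q k * (Real.log (w k) - Real.log (q k)) := by
    intro q hq
    have h1 : lam * Real.log Z = ∑ k, q k * (lam * Real.log Z) := by
      rw [← Finset.sum_mul, hq, one_mul]
    rw [h1, shannonH, ← Finset.sum_neg_distrib, Finset.mul_sum, Finset.mul_sum, Finset.mul_sum,
      ← Finset.sum_add_distrib, ← Finset.sum_add_distrib]
    refine Finset.sum_congr rfl fun k _ => ?_
    linear_combination (q k) * hlog k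
  rw [key p hp.2, key w hw1]
  have := mul_neg_of_pos_of_neg hl (gibbs_sum_lt hp.1 hwpos hp.2 hw1 h)
  simpa using this

/-- z-block of OSLO's Proposition 1: with `ξ` and `μ` fixed, the OSLO objective as a
function of feasible `z` (equal to `y` on the support, in `Δ^K` on the query set) attains
its unique global maximum at the softmax point
`z*_{ik} = exp((ξ_i/λ_z)·log p(v_i, k; μ)) / Σ_j exp((ξ_i/λ_z)·log p(v_i, j; μ))`. -/
theorem oslo_z_block
    {E : Type*} [NormedAddCommGroup E] [InnerProductSpace ℝ E]
    {ι : Type*} [DecidableEq ι] {K : ℕ} (hK : 1 ≤ K)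
    (S Q : Finset ι) (hSQ : Disjoint S Q)
    (v : ι → E) (y : ι → Fin K → ℝ) (hy : ∀ i ∈ S, ∃ k, y i = Pi.single k 1)
    (lamxi lamz c : ℝ) (hlxi : 0 < lamxi) (hlz : 0 < lamz)
    (ξ : ι → ℝ) (hξS : ∀ i ∈ S, ξ i = 1) (hξQ : ∀ i ∈ Q, ξ i ∈ Set.Icc (0 : ℝ) 1)
    (μ : Fin K → E)
    (zstar : ι → Fin K → ℝ) (hzstarS : ∀ i ∈ S, zstar i = y i)
    (hzstarQ : ∀ i ∈ Q, ∀ k,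
      zstar i k = Real.exp ((ξ i / lamz) * logp c (v i) k μ) /
        ∑ j, Real.exp ((ξ i / lamz) * logp c (v i) j μ)) :
    ∀ z : ι → Fin K → ℝ, (∀ i ∈ S, z i = y i) →
      (∀ i ∈ Q, z i ∈ stdSimplex ℝ (Fin K)) →
      (∃ i ∈ Q, z i ≠ zstar i) →
      osloL S Q v lamxi lamz c ξ z μ < osloL S Q v lamxi lamz c ξ zstar μ := by
  intro z hzS hzQ hne
  obtain ⟨i, hi, hzi⟩ := hne
  unfold osloL
  rw [Finset.sum_union hSQ, Finset.sum_union hSQ]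
  have hS : ∑ i ∈ S, ξ i * ∑ k, z i k * logp c (v i) k μ
      = ∑ i ∈ S, ξ i * ∑ k, zstar i k * logp c (v i) k μ :=
    Finset.sum_congr rfl fun j hj => by rw [hzS j hj, hzstarS j hj]
  rw [hS, add_assoc, add_assoc, ← Finset.sum_add_distrib, ← Finset.sum_add_distrib]
  refine add_lt_add_right (Finset.sum_lt_sum ?_ ⟨i, hi, ?_⟩) _
  · intro j hj
    by_cases h : z j = zstar j
    · rw [h]
    · have := block_lt hK (ξ j) lamz hlz (fun k => logp c (v j) k μ) (z j) (zstar j)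
        (hzQ j hj) (hzstarQ j hj) h
      linarith
  · have := block_lt hK (ξ i) lamz hlz (fun k => logp c (v i) k μ) (z i) (zstar i)
      (hzQ i hi) (hzstarQ i hi) hzi
    linarith
end

section
/- In the OSLO setup with Q nonempty, let (ξ^t, z^t, μ^t) be feasible, i.e. ξ^t_i = 1 and z^t_i = y_i for i ∈ S, and ξ^t_i ∈ (0,1), z^t_i ∈ Δ^K for i ∈ Q. Define the Proposition-1 updates applied in sequence: for i ∈ Q, ξ^{t+1}_i = σ((1/λ_ξ)·Σ_k z^t_{ik}·log p(v_i, k; μ^t)) (and ξ^{t+1}_i = 1 for i ∈ S); for i ∈ Q, z^{t+1}_{ik} = exp((ξ^{t+1}_i/λ_z)·log p(v_i, k; μ^t)) / Σ_j exp((ξ^{t+1}_i/λ_z)·log p(v_i, j; μ^t)) (and z^{t+1}_i = y_i for i ∈ S); and μ^{t+1}_k = (Σ_{i∈S∪Q} ξ^{t+1}_i·z^{t+1}_{ik}·v_i)/(Σ_{i∈S∪Q} ξ^{t+1}_i·z^{t+1}_{ik}), the denominator being positive since Q is nonempty. Then L(ξ^{t+1}, z^{t+1}, μ^{t+1}) ≥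 L(ξ^t, z^t, μ^t), i.e. the block-coordinate updates of Proposition 1 never decrease the OSLO objective. -/
open scoped BigOperators

lemma oslo_aux_log {x q : ℝ} (hx : 0 ≤ x) (hq : 0 < q) :
    x * (Real.log q - Real.log x) ≤ q - x := by
  rcases hx.eq_or_lt with h | h
  · subst h; simp; exact hq.le
  · rw [← Real.log_div hq.ne' h.ne']
    have h1 := Real.log_le_sub_one_of_pos (div_pos hq h)
    calc x * Real.log (q / x) ≤ x * (q / x - 1) := mul_le_mul_of_nonneg_left h1 hx
      _ = q - x := by field_simp

lemma oslo_aux_bin {x a : ℝ} (hx : x ∈ Set.Ioo (0 : ℝ) 1) :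
    x * a + Hb x ≤ sigmoid a * a + Hb (sigmoid a) := by
  have e := Real.exp_pos (-a)
  have hd : 0 < 1 + Real.exp (-a) := by positivity
  have h1 : 1 - sigmoid a = Real.exp (-a) / (1 + Real.exp (-a)) := by
    unfold sigmoid; field_simp; ring
  have hq : 0 < sigmoid a := by unfold sigmoid; positivity
  have hq1 : 0 < 1 - sigmoid a := by rw [h1]; positivity
  have ha : a = Real.log (sigmoid a) - Real.log (1 - sigmoid a) := by
    rw [h1, Real.log_div e.ne' hd.ne', sigmoid, Real.log_div one_ne_zero hd.ne', Real.log_exp]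
    rw [Real.log_one]; ring
  have i1 := oslo_aux_log hx.1.le hq
  have i2 := oslo_aux_log (x := 1 - x) (by linarith [hx.2]) hq1
  generalize sigmoid a = q at *
  subst ha
  unfold Hb
  nlinarith

lemma oslo_aux_gibbs {K : ℕ} (a x q : Fin K → ℝ) (hK : 1 ≤ K) (hx : x ∈ stdSimplex ℝ (Fin K))
    (hq : ∀ k, q k = Real.exp (a k) / ∑ j, Real.exp (a j)) :
    (∀ k, 0 < q k) ∧ ∑ k, x k * a k + shannonH x ≤ ∑ k, q k * a k + shannonH q := by
  have : Nonempty (Fin K) := ⟨⟨0, hK⟩⟩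
  have hZ : 0 < ∑ j, Real.exp (a j) :=
    Finset.sum_pos (fun j _ => Real.exp_pos _) Finset.univ_nonempty
  have hqp : ∀ k, 0 < q k := fun k => by rw [hq]; exact div_pos (Real.exp_pos _) hZ
  have hqs : ∑ k, q k = 1 := by
    simp_rw [hq]; rw [← Finset.sum_div, div_self hZ.ne']
  have hl : ∀ k, a k = Real.log (q k) + Real.log (∑ j, Real.exp (a j)) := fun k => by
    rw [hq, Real.log_div (Real.exp_pos _).ne' hZ.ne', Real.log_exp]; ring
  refine ⟨hqp, ?_⟩
  generalize Real.log (∑ j, Real.exp (a j)) = c at hl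
  have key : ∀ w : Fin K → ℝ, ∑ k, w k = 1 →
      ∑ k, w k * a k + shannonH w = ∑ k, w k * (Real.log (q k) - Real.log (w k)) + c := by
    intro w hw
    have : c = ∑ k, w k * c := by rw [← Finset.sum_mul, hw, one_mul]
    rw [this, shannonH, ← sub_eq_add_neg, ← Finset.sum_sub_distrib, ← Finset.sum_add_distrib]
    refine Finset.sum_congr rfl fun k _ => ?_
    rw [hl k]; ring
  rw [key x hx.2, key q hqs]
  have : ∑ k, x k * (Real.log (q k) - Real.log (x k)) ≤ ∑ k, (q k - x k) :=
    Finset.sum_le_sum fun k _ => oslo_aux_log (hx.1 k) (hqp k)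
  rw [Finset.sum_sub_distrib, hqs, hx.2] at this
  simp only [sub_self, mul_zero, Finset.sum_const_zero]
  linarith

lemma oslo_aux_mean {E : Type*} [NormedAddCommGroup E] [InnerProductSpace ℝ E]
    {ι : Type*} (T : Finset ι) (w : ι → ℝ) (v : ι → E) (hW : 0 < ∑ i ∈ T, w i) (m m' : E)
    (hm : m' = (∑ i ∈ T, w i)⁻¹ • ∑ i ∈ T, w i • v i) :
    ∑ i ∈ T, w i * ‖v i - m'‖ ^ 2 ≤ ∑ i ∈ T, w i * ‖v i - m‖ ^ 2 := by
  have h0 : ∑ i ∈ T, w i * inner ℝ (v i - m') (m' - m) = 0 := by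
    have : ∑ i ∈ T, w i • (v i - m') = 0 := by
      simp_rw [smul_sub]
      rw [Finset.sum_sub_distrib, ← Finset.sum_smul, hm, smul_smul, mul_inv_cancel₀ hW.ne',
        one_smul, sub_self]
    simp_rw [← real_inner_smul_left]
    rw [← sum_inner, this, inner_zero_left]
  have h1 : ∀ i ∈ T, w i * ‖v i - m‖ ^ 2 = w i * ‖v i - m'‖ ^ 2
      + 2 * (w i * inner ℝ (v i - m') (m' - m)) + w i * ‖m' - m‖ ^ 2 := by
    intro i _
    rw [← sub_add_sub_cancel (v i) m' m, norm_add_sq_real]; ring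
  rw [Finset.sum_congr rfl h1, Finset.sum_add_distrib, Finset.sum_add_distrib,
    ← Finset.mul_sum, h0, ← Finset.sum_mul]
  have := mul_nonneg hW.le (sq_nonneg ‖m' - m‖)
  linarith

/-- The block-coordinate updates of OSLO's Proposition 1, applied in sequence
(ξ-update, then z-update, then μ-update), never decrease the OSLO objective. -/
theorem oslo_updates_monotone
    {E : Type*} [NormedAddCommGroup E] [InnerProductSpace ℝ E]
    {ι : Type*} [DecidableEq ι] {K : ℕ} (hK : 1 ≤ K)
    (S Q : Finset ι) (hSQ : Disjoint S Q) (hQ : Q.Nonempty)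
    (v : ι → E) (y : ι → Fin K → ℝ) (hy : ∀ i ∈ S, ∃ k, y i = Pi.single k 1)
    (lamxi lamz c : ℝ) (hlxi : 0 < lamxi) (hlz : 0 < lamz)
    -- the current feasible iterate (ξ, z, μ)
    (ξ : ι → ℝ) (z : ι → Fin K → ℝ) (μ : Fin K → E)
    (hξS : ∀ i ∈ S, ξ i = 1) (hξQ : ∀ i ∈ Q, ξ i ∈ Set.Ioo (0 : ℝ) 1)
    (hzS : ∀ i ∈ S, z i = y i) (hzQ : ∀ i ∈ Q, z i ∈ stdSimplex ℝ (Fin K))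
    -- the ξ-update
    (ξ' : ι → ℝ) (hξ'S : ∀ i ∈ S, ξ' i = 1)
    (hξ'Q : ∀ i ∈ Q,
      ξ' i = sigmoid ((1 / lamxi) * ∑ k, z i k * logp c (v i) k μ))
    -- the z-update
    (z' : ι → Fin K → ℝ) (hz'S : ∀ i ∈ S, z' i = y i)
    (hz'Q : ∀ i ∈ Q, ∀ k,
      z' i k = Real.exp ((ξ' i / lamz) * logp c (v i) k μ) /
        ∑ j, Real.exp ((ξ' i / lamz) * logp c (v i) j μ))
    -- the μ-update
    (μ' : Fin K → E)
    (hμ' : ∀ k, μ' k =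
      (∑ i ∈ S ∪ Q, ξ' i * z' i k)⁻¹ • ∑ i ∈ S ∪ Q, (ξ' i * z' i k) • v i) :
    osloL S Q v lamxi lamz c ξ z μ ≤ osloL S Q v lamxi lamz c ξ' z' μ' := by
  have hx'p : ∀ i ∈ Q, 0 < ξ' i := fun i hi => by
    rw [hξ'Q i hi]; unfold sigmoid; positivity
  have hg := fun i (hi : i ∈ Q) => oslo_aux_gibbs
    (fun k => (ξ' i / lamz) * logp c (v i) k μ) (z i) (z' i) hK (hzQ i hi) (hz'Q i hi)
  have step1 : osloL S Q v lamxi lamz c ξ z μ ≤ osloL S Q v lamxi lamz c ξ' z' μ := by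
    unfold osloL
    rw [Finset.sum_union hSQ, Finset.sum_union hSQ, add_assoc, add_assoc,
      ← Finset.sum_add_distrib, ← Finset.sum_add_distrib]
    refine add_le_add (le_of_eq ?_) (Finset.sum_le_sum fun i hi => ?_)
    · refine Finset.sum_congr rfl fun i hi => ?_
      rw [hξS i hi, hξ'S i hi, hzS i hi, hz'S i hi]
    · have b := oslo_aux_bin (a := (1 / lamxi) * ∑ k, z i k * logp c (v i) k μ) (hξQ i hi)
      rw [← hξ'Q i hi] at b
      have g := (hg i hi).2
      have r : ∀ w : Fin K → ℝ, ∑ k, w k * ((ξ' i / lamz) * logp c (v i) k μ)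
          = (ξ' i / lamz) * ∑ k, w k * logp c (v i) k μ := fun w => by
        rw [Finset.mul_sum]; exact Finset.sum_congr rfl fun k _ => by ring
      simp only [r] at g
      have b' := mul_le_mul_of_nonneg_left b hlxi.le
      have g' := mul_le_mul_of_nonneg_left g hlz.le
      have e1 : ∀ x A h : ℝ, lamxi * (x * (1 / lamxi * A) + h) = x * A + lamxi * h := by
        intros; field_simp
      have e2 : ∀ x A h : ℝ, lamz * (x / lamz * A + h) = x * A + lamz * h := by
        intros; field_simp
      rw [e1, e1] at b'
      rw [e2, e2] at g'
      linarith
  refine step1.trans ?_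
  unfold osloL
  refine add_le_add ?_ le_rfl
  have sw : ∀ m : Fin K → E, ∑ i ∈ S ∪ Q, ξ' i * ∑ k, z' i k * logp c (v i) k m
      = ∑ k, (-(1 / 2) * ∑ i ∈ S ∪ Q, (ξ' i * z' i k) * ‖v i - m k‖ ^ 2
        + c * ∑ i ∈ S ∪ Q, ξ' i * z' i k) := by
    intro m
    simp_rw [Finset.mul_sum]
    rw [Finset.sum_comm]
    refine Finset.sum_congr rfl fun k _ => ?_
    rw [← Finset.sum_add_distrib]
    refine Finset.sum_congr rfl fun i _ => ?_
    unfold logp; ring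
  rw [sw, sw]
  refine Finset.sum_le_sum fun k _ => ?_
  have hW : 0 < ∑ i ∈ S ∪ Q, ξ' i * z' i k := by
    rw [Finset.sum_union hSQ]
    refine add_pos_of_nonneg_of_pos (Finset.sum_nonneg fun i hi => ?_)
      (Finset.sum_pos (fun i hi => mul_pos (hx'p i hi) ((hg i hi).1 k)) hQ)
    obtain ⟨j, hj⟩ := hy i hi
    rw [hξ'S i hi, hz'S i hi, hj, one_mul, Pi.single_apply]
    split_ifs <;> norm_num
  have := oslo_aux_mean (S ∪ Q) (fun i => ξ' i * z' i k) v hW (μ k) (μ' k) (hμ' k)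
  linarith
end

section
/- Let E be a real inner product space, C a nonempty finite index set of classes, and (D_k)_{k∈C} pairwise disjoint nonempty finite sets of points of E with D = ∪_{k∈C} D_k, and assume D \ D_k is nonempty for every k. For each k let μ_k = (1/|D_k|)·Σ_{z′∈D_k} z′ be the centroid of class k, and assume there are no ties: for every k, every z ∈ D \ D_k and every z′ ∈ D_k, ‖z′ − μ_k‖ ≠ ‖z − μ_k‖. Define the Imposture Factor IF_{z|k} = (1/|D_k|)·|{z′ ∈ D_k : ‖z′ − μ_k‖ > ‖z − μ_k‖}|, the Mean Imposture Factor MIF = (1/|C|)·Σ_{k∈C} (1/|D \ D_k|)·Σ_{z∈D\D_k} IF_{z|k}, and for each k the AUROC of the detector scoring each point by its distance to μ_k, AUROC_k = (1/(|D_k|·|D \ D_k|))·|{(z′, z) ∈ D_k × (D \ D_k) : ‖z − μ_k‖ > ‖z′ − μ_k‖}|. Then MIF = 1 − (1/|C|)·Σ_{k∈C} AUROC_k. -/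
open scoped BigOperators

/-- The Mean Imposture Factor equals one minus the mean per-class AUROC of the
distance-to-centroid detector, in the absence of ties. Here `D k` are the pairwise
disjoint nonempty classes, `Dall` their union, `μ k` the class centroids,
`IF z k` the Imposture Factor of `z` w.r.t. class `k`, `MIF` the Mean Imposture Factor,
and `AUROC k` the fraction of inlier–outlier pairs in which the outlier receives the
strictly larger distance to the centroid of class `k`. -/
theorem mif_eq_one_sub_mean_auroc
    {E : Type*} [NormedAddCommGroup E] [InnerProductSpace ℝ E] [DecidableEq E]
    {C : Type*} [Fintype C] [Nonempty C]
    (D : C → Finset E)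
    (hdisj : ∀ k l, k ≠ l → Disjoint (D k) (D l))
    (hne : ∀ k, (D k).Nonempty)
    (Dall : Finset E) (hDall : Dall = Finset.univ.biUnion D)
    (hout : ∀ k, (Dall \ D k).Nonempty)
    (μ : C → E) (hμ : ∀ k, μ k = ((D k).card : ℝ)⁻¹ • ∑ x ∈ D k, x)
    (hties : ∀ k, ∀ z ∈ Dall \ D k, ∀ z' ∈ D k, ‖z' - μ k‖ ≠ ‖z - μ k‖)
    (IF : E → C → ℝ)
    (hIF : ∀ z k, IF z k = ((D k).card : ℝ)⁻¹ *
      (((D k).filter (fun z' => ‖z - μ k‖ < ‖z' - μ k‖)).card : ℝ))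
    (MIF : ℝ)
    (hMIF : MIF = (Fintype.card C : ℝ)⁻¹ *
      ∑ k, ((Dall \ D k).card : ℝ)⁻¹ * ∑ z ∈ Dall \ D k, IF z k)
    (AUROC : C → ℝ)
    (hAUROC : ∀ k, AUROC k = (((D k).card : ℝ) * ((Dall \ D k).card : ℝ))⁻¹ *
      ((((D k) ×ˢ (Dall \ D k)).filter
        (fun p => ‖p.1 - μ k‖ < ‖p.2 - μ k‖)).card : ℝ)) :
    MIF = 1 - (Fintype.card C : ℝ)⁻¹ * ∑ k, AUROC k := by
  have key : ∀ k, ((Dall \ D k).card : ℝ)⁻¹ * ∑ z ∈ Dall \ D k, IF z k = 1 - AUROC k := by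
    intro k
    have h1 : ((D k).card : ℝ) ≠ 0 := by
      exact_mod_cast (hne k).card_pos.ne'
    have h2 : ((Dall \ D k).card : ℝ) ≠ 0 := by
      exact_mod_cast (hout k).card_pos.ne'
    have h3 : (∑ z ∈ Dall \ D k,
          (((D k).filter (fun z' => ‖z - μ k‖ < ‖z' - μ k‖)).card : ℝ)) +
        ((((D k) ×ˢ (Dall \ D k)).filter
          (fun p => ‖p.1 - μ k‖ < ‖p.2 - μ k‖)).card : ℝ) =
        ((D k).card : ℝ) * ((Dall \ D k).card : ℝ) := by
      simp only [Finset.card_filter, Nat.cast_sum]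
      rw [Finset.sum_product_right, ← Finset.sum_add_distrib]
      have h4 : ∀ z ∈ Dall \ D k,
          (∑ z' ∈ D k, ((if ‖z - μ k‖ < ‖z' - μ k‖ then 1 else 0 : ℕ) : ℝ)) +
            ∑ z' ∈ D k, ((if ‖z' - μ k‖ < ‖z - μ k‖ then 1 else 0 : ℕ) : ℝ) =
          ((D k).card : ℝ) := by
        intro z hz
        rw [← Finset.sum_add_distrib, Finset.card_eq_sum_ones, Nat.cast_sum]
        refine Finset.sum_congr rfl fun z' hz' => ?_
        rcases lt_or_gt_of_ne (hties k z hz z' hz') with h | h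
        · simp [h, h.not_gt]
        · simp [h, h.not_gt]
      rw [Finset.sum_congr rfl h4, Finset.sum_const, nsmul_eq_mul, mul_comm]
    simp only [hIF, hAUROC k]
    rw [← Finset.mul_sum, eq_sub_of_add_eq h3]
    field_simp
  have hC : (Fintype.card C : ℝ) ≠ 0 := by
    exact_mod_cast Fintype.card_ne_zero
  rw [hMIF, Finset.sum_congr rfl fun k _ => key k, Finset.sum_sub_distrib, mul_sub]
  simp [hC]
end
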